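/- In the upper model, for any fixed simplex σ ∈ ∂Δ_n, the probability that a random simplicial complex Y contains σ equals 1 − ∏_{τ∈∂Δ_n, τ⊇σ} q_τ; equivalently, Σ_{Y complex, σ∉Y} P̄_n(Y) = ∏_{τ∈∂Δ_n, τ⊇σ} q_τ. -/

import Mathlib

open Finset

/-- The full simplex `Δₙ`: all nonempty subsets of `[n] = {0,…,n}`. -/
def simplexAll (n : ℕ) : Finset (Finset (Fin (n+1))) :=
  Finset.univ.filter fun σ => σ.Nonempty

/-- The boundary `∂Δₙ`: all nonempty proper subsets of `[n]`. -/
def bdry (n : ℕ) : Finset (Finset (Fin (n+1))) :=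
  Finset.univ.filter fun σ => σ.Nonempty ∧ σ ≠ Finset.univ

/-- A hypergraph is a simplicial complex if it is closed under passing to
nonempty subsets. -/
def IsComplex {n : ℕ} (X : Finset (Finset (Fin (n+1)))) : Prop :=
  ∀ σ ∈ X, ∀ τ : Finset (Fin (n+1)), τ ⊆ σ → τ.Nonempty → τ ∈ X

instance {n : ℕ} (X : Finset (Finset (Fin (n+1)))) : Decidable (IsComplex X) :=
  inferInstanceAs (Decidable (∀ σ ∈ X, ∀ τ : Finset (Fin (n+1)), τ ⊆ σ → τ.Nonempty → τ ∈ X))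

/-- The dual hypergraph `c(X) = {σ̂ : σ ∈ ∂Δₙ, σ ∉ X}`, where `σ̂ = [n] \ σ`. -/
def dual {n : ℕ} (X : Finset (Finset (Fin (n+1)))) : Finset (Finset (Fin (n+1))) :=
  (bdry n \ X).image fun σ => σᶜ

/-- `X̄`: the smallest simplicial complex containing the hypergraph `X`. -/
def clUp {n : ℕ} (X : Finset (Finset (Fin (n+1)))) : Finset (Finset (Fin (n+1))) :=
  Finset.univ.filter fun τ => τ.Nonempty ∧ ∃ σ ∈ X, τ ⊆ σ

/-- `X̲`: the largest simplicial complex contained in the hypergraph `X`. -/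
def clLow {n : ℕ} (X : Finset (Finset (Fin (n+1)))) : Finset (Finset (Fin (n+1))) :=
  Finset.univ.filter fun τ => τ.Nonempty ∧ ∀ σ : Finset (Fin (n+1)), σ ⊆ τ → σ.Nonempty → σ ∈ X

/-- The Bernoulli measure with parameters `p` on hypergraphs contained in the
ambient set `S` of simplices: `P(X) = ∏_{σ∈X} p σ · ∏_{σ∈S\X} (1 - p σ)`. -/
def bern {n : ℕ} (S : Finset (Finset (Fin (n+1)))) (p : Finset (Fin (n+1)) → ℝ)
    (X : Finset (Finset (Fin (n+1)))) : ℝ :=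
  (∏ σ ∈ X, p σ) * ∏ σ ∈ S \ X, (1 - p σ)

/-- The upper measure: `P̄(Y) = Σ_{X ⊆ S, X̄ = Y} P(X)`. -/
def upperP {n : ℕ} (S : Finset (Finset (Fin (n+1)))) (p : Finset (Fin (n+1)) → ℝ)
    (Y : Finset (Finset (Fin (n+1)))) : ℝ :=
  ∑ X ∈ S.powerset.filter (fun X => clUp X = Y), bern S p X

/-- The lower measure: `P̲(Y) = Σ_{X ⊆ S, X̲ = Y} P(X)`. -/
def lowerP {n : ℕ} (S : Finset (Finset (Fin (n+1)))) (p : Finset (Fin (n+1)) → ℝ)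
    (Y : Finset (Finset (Fin (n+1)))) : ℝ :=
  ∑ X ∈ S.powerset.filter (fun X => clLow X = Y), bern S p X

/-- External simplices of `Y` relative to the ambient set `S`: simplices
`σ ∈ S` with `σ ∉ Y` but every nonempty proper subset of `σ` in `Y`. -/
def extSimp {n : ℕ} (S Y : Finset (Finset (Fin (n+1)))) : Finset (Finset (Fin (n+1))) :=
  S.filter fun σ => σ ∉ Y ∧ ∀ τ : Finset (Fin (n+1)), τ ⊂ σ → τ.Nonempty → τ ∈ Y

/-- Maximal simplices of `Y`: simplices of `Y` not properly contained in another
simplex of `Y`. -/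
def maxSimp {n : ℕ} (Y : Finset (Finset (Fin (n+1)))) : Finset (Finset (Fin (n+1))) :=
  Y.filter fun σ => ∀ τ ∈ Y, σ ⊆ τ → σ = τ

/-! Given a nonempty `σ`, the complex `X̄` contains `σ` exactly when the hypergraph `X` contains
some `τ ⊇ σ`. Hence `σ ∉ X̄` is the event that each of the independent trials `τ ⊇ σ` fails; the
trials at the remaining simplices are unconstrained and contribute a total mass of `1`. -/

section Closure

variable {n : ℕ} {S X : Finset (Finset (Fin (n + 1)))} {σ τ : Finset (Fin (n + 1))}

theorem mem_bdry : σ ∈ bdry n ↔ σ.Nonempty ∧ σ ≠ univ := by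
  simp [bdry]

theorem isComplex_bdry (n : ℕ) : IsComplex (bdry n) := fun _ hσ _ hτσ hτ =>
  mem_bdry.mpr ⟨hτ, fun h => (mem_bdry.mp hσ).2 (univ_subset_iff.mp (h ▸ hτσ))⟩

theorem mem_clUp : τ ∈ clUp X ↔ τ.Nonempty ∧ ∃ σ ∈ X, τ ⊆ σ := by
  simp [clUp]

theorem isComplex_clUp (X : Finset (Finset (Fin (n + 1)))) : IsComplex (clUp X) := by
  intro σ hσ τ hτσ hτ
  obtain ⟨-, ρ, hρ, hσρ⟩ := mem_clUp.mp hσ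
  exact mem_clUp.mpr ⟨hτ, ρ, hρ, hτσ.trans hσρ⟩

theorem clUp_subset (hS : IsComplex S) (hXS : X ⊆ S) : clUp X ⊆ S := by
  intro τ hτ
  obtain ⟨hne, σ, hσ, hτσ⟩ := mem_clUp.mp hτ
  exact hS σ (hXS hσ) τ hτσ hne

theorem filter_powerset_notMem_clUp (S : Finset (Finset (Fin (n + 1)))) (hσ : σ.Nonempty) :
    S.powerset.filter (fun X => σ ∉ clUp X) = (S.filter fun τ => ¬ σ ⊆ τ).powerset := by
  ext X
  simp only [mem_filter, mem_powerset, mem_clUp, hσ, true_and, not_exists, not_and,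
    subset_iff (s₁ := X), forall_and]

end Closure

section Measure

variable {n : ℕ} {S T X : Finset (Finset (Fin (n + 1)))} {σ : Finset (Fin (n + 1))}

theorem sum_bern_powerset_self (S : Finset (Finset (Fin (n + 1)))) (p : Finset (Fin (n + 1)) → ℝ) :
    ∑ X ∈ S.powerset, bern S p X = 1 := by
  simpa [bern] using (prod_add p (fun τ => 1 - p τ) S).symm

theorem bern_eq_bern_mul_prod_sdiff (hXT : X ⊆ T) (hTS : T ⊆ S) (p : Finset (Fin (n + 1)) → ℝ) :
    bern S p X = bern T p X * ∏ τ ∈ S \ T, (1 - p τ) := by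
  have hunion : S \ X = T \ X ∪ S \ T := by
    rw [union_comm, sdiff_union_sdiff_cancel hTS hXT]
  have hdisj : Disjoint (T \ X) (S \ T) := disjoint_sdiff.mono_left sdiff_subset
  rw [bern, bern, hunion, prod_union hdisj, mul_assoc]

theorem sum_bern_powerset_of_subset (hTS : T ⊆ S) (p : Finset (Fin (n + 1)) → ℝ) :
    ∑ X ∈ T.powerset, bern S p X = ∏ τ ∈ S \ T, (1 - p τ) := by
  calc ∑ X ∈ T.powerset, bern S p X
      = ∑ X ∈ T.powerset, bern T p X * ∏ τ ∈ S \ T, (1 - p τ) :=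
        sum_congr rfl fun _ hX => bern_eq_bern_mul_prod_sdiff (mem_powerset.mp hX) hTS p
    _ = ∏ τ ∈ S \ T, (1 - p τ) := by rw [← sum_mul, sum_bern_powerset_self, one_mul]

theorem sum_upperP_filter_isComplex (hS : IsComplex S) (p : Finset (Fin (n + 1)) → ℝ)
    (Q : Finset (Finset (Fin (n + 1))) → Prop) [DecidablePred Q] :
    ∑ Y ∈ S.powerset.filter (fun Y => IsComplex Y ∧ Q Y), upperP S p Y
      = ∑ X ∈ S.powerset.filter (fun X => Q (clUp X)), bern S p X := by
  have hmaps : ∀ X ∈ S.powerset.filter (fun X => Q (clUp X)),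
      clUp X ∈ S.powerset.filter (fun Y => IsComplex Y ∧ Q Y) := by
    intro X hX
    obtain ⟨hXS, hQ⟩ := mem_filter.mp hX
    exact mem_filter.mpr
      ⟨mem_powerset.mpr (clUp_subset hS (mem_powerset.mp hXS)), isComplex_clUp X, hQ⟩
  rw [← sum_fiberwise_of_maps_to hmaps]
  refine sum_congr rfl fun Y hY => ?_
  have hQ : Q Y := (mem_filter.mp hY).2.2
  have hfiber (X : Finset (Finset (Fin (n + 1)))) : clUp X = Y ↔ Q (clUp X) ∧ clUp X = Y :=
    ⟨fun h => ⟨h ▸ hQ, h⟩, And.right⟩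
  rw [upperP, filter_filter, filter_congr fun X _ => hfiber X]

theorem sum_bern_notMem_clUp (S : Finset (Finset (Fin (n + 1)))) (p : Finset (Fin (n + 1)) → ℝ)
    (hσ : σ.Nonempty) :
    ∑ X ∈ S.powerset.filter (fun X => σ ∉ clUp X), bern S p X
      = ∏ τ ∈ S.filter (fun τ => σ ⊆ τ), (1 - p τ) := by
  have hcompl : S \ S.filter (fun τ => ¬ σ ⊆ τ) = S.filter (fun τ => σ ⊆ τ) := by
    simp only [← filter_not, not_not]
  rw [filter_powerset_notMem_clUp S hσ, sum_bern_powerset_of_subset (filter_subset _ _), hcompl]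

theorem sum_bern_mem_clUp (S : Finset (Finset (Fin (n + 1)))) (p : Finset (Fin (n + 1)) → ℝ)
    (hσ : σ.Nonempty) :
    ∑ X ∈ S.powerset.filter (fun X => σ ∈ clUp X), bern S p X
      = 1 - ∏ τ ∈ S.filter (fun τ => σ ⊆ τ), (1 - p τ) := by
  rw [eq_sub_iff_add_eq, ← sum_bern_notMem_clUp S p hσ, sum_filter_add_sum_filter_not,
    sum_bern_powerset_self]

end Measure

theorem upper_contains_simplex_general {n : ℕ} {S : Finset (Finset (Fin (n + 1)))}
    (hS : IsComplex S) (p : Finset (Fin (n + 1)) → ℝ) {σ : Finset (Fin (n + 1))} (hσ : σ.Nonempty) :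
    (∑ Y ∈ S.powerset.filter (fun Y => IsComplex Y ∧ σ ∈ Y), upperP S p Y
      = 1 - ∏ τ ∈ S.filter (fun τ => σ ⊆ τ), (1 - p τ)) ∧
    (∑ Y ∈ S.powerset.filter (fun Y => IsComplex Y ∧ σ ∉ Y), upperP S p Y
      = ∏ τ ∈ S.filter (fun τ => σ ⊆ τ), (1 - p τ)) :=
  ⟨(sum_upperP_filter_isComplex hS p (σ ∈ ·)).trans (sum_bern_mem_clUp S p hσ),
    (sum_upperP_filter_isComplex hS p (σ ∉ ·)).trans (sum_bern_notMem_clUp S p hσ)⟩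

/-- In the upper model, the probability that a random simplicial complex `Y`
contains a fixed simplex `σ ∈ ∂Δₙ` equals `1 - ∏_{τ⊇σ} q_τ`; equivalently,
`Σ_{Y complex, σ∉Y} P̄ₙ(Y) = ∏_{τ⊇σ} q_τ`. -/
theorem upper_contains_simplex (n : ℕ) (hn : 1 ≤ n) (p : Finset (Fin (n+1)) → ℝ)
    (hp : ∀ τ ∈ bdry n, 0 ≤ p τ ∧ p τ ≤ 1)
    (σ : Finset (Fin (n+1))) (hσ : σ ∈ bdry n) :
    (∑ Y ∈ (bdry n).powerset.filter (fun Y => IsComplex Y ∧ σ ∈ Y),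
        upperP (bdry n) p Y
      = 1 - ∏ τ ∈ (bdry n).filter (fun τ => σ ⊆ τ), (1 - p τ)) ∧
    (∑ Y ∈ (bdry n).powerset.filter (fun Y => IsComplex Y ∧ σ ∉ Y),
        upperP (bdry n) p Y
      = ∏ τ ∈ (bdry n).filter (fun τ => σ ⊆ τ), (1 - p τ)) :=
  upper_contains_simplex_general (isComplex_bdry n) p (mem_bdry.mp hσ).1
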